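/- Let F, K be positive integers and 0 ≤ Z < F such that (Z + 1) divides K(F − Z). If s(F, K, Z) = K(F − Z)/(Z + 1), then for every positive integer ℓ, s(F, ℓK, Z) = ℓK(F − Z)/(Z + 1). -/

import Mathlib

open scoped Classical

/-- A placement delivery array with parameters `(F, K, Z)` over alphabet `S`:
an `F × K` array of cells that are either empty (`none`) or an element of `S`,
such that each column has exactly `Z` empty cells, no element occurs twice in a
row or in a column, and two equal entries in positions `(j₁,k₁)`, `(j₂,k₂)`
force the cells `(j₁,k₂)` and `(j₂,k₁)` to be empty. -/
def IsPDA {S : Type} (F K Z : ℕ) (A : Fin F → Fin K → Option S) : Prop :=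
  (∀ k : Fin K, (Finset.univ.filter fun j : Fin F => A j k = none).card = Z) ∧
  (∀ (j : Fin F) (k₁ k₂ : Fin K) (t : S), A j k₁ = some t → A j k₂ = some t → k₁ = k₂) ∧
  (∀ (j₁ j₂ : Fin F) (k : Fin K) (t : S), A j₁ k = some t → A j₂ k = some t → j₁ = j₂) ∧
  (∀ (j₁ j₂ : Fin F) (k₁ k₂ : Fin K) (t : S), j₁ ≠ j₂ → k₁ ≠ k₂ →
      A j₁ k₁ = some t → A j₂ k₂ = some t → A j₁ k₂ = none ∧ A j₂ k₁ = none)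

/-- `sPDA F K Z` is the minimum size of an alphabet `S` for which an `S`-PDA with
parameters `(F, K, Z)` exists. -/
noncomputable def sPDA (F K Z : ℕ) : ℕ :=
  sInf {n : ℕ | ∃ A : Fin F → Fin K → Option (Fin n), IsPDA F K Z A}

/-!
Fix a cell `(j₀, k₀)` holding the symbol `t`. Every other occurrence of `t` lies in a row that
is empty in column `k₀`, and different occurrences lie in different rows, so `t` occurs at most
`Z + 1` times. Counting the `K (F - Z)` nonempty cells by symbol gives
`K (F - Z) ≤ (Z + 1) s(F, K, Z)`. Conversely, `ℓ` copies of an array side by side, on pairwise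
disjoint alphabets, form an array again, so `s(F, ℓK, Z) ≤ ℓ s(F, K, Z)`. If the lower bound is
attained for `K`, the two estimates for `ℓK` coincide.
-/

namespace IsPDA

variable {S T : Type} {F K Z : ℕ} {A : Fin F → Fin K → Option S}

theorem card_filter_ne_none (hA : IsPDA F K Z A) (k : Fin K) :
    (Finset.univ.filter fun j => A j k ≠ none).card = F - Z := by
  have hsplit := Finset.card_filter_add_card_filter_not (s := Finset.univ) (A · k = none)
  rw [hA.1 k, Finset.card_univ, Fintype.card_fin] at hsplit
  exact Nat.eq_sub_of_add_eq' hsplit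

theorem card_filter_uncurry_ne_none (hA : IsPDA F K Z A) :
    (Finset.univ.filter fun p : Fin F × Fin K => A p.1 p.2 ≠ none).card = K * (F - Z) := by
  calc
    _ = ∑ k, (Finset.univ.filter fun j => A j k ≠ none).card := by
      simp only [Finset.card_filter, Fintype.sum_prod_type_right]
    _ = K * (F - Z) := by simp [hA.card_filter_ne_none]

theorem eq_or_eq_none (hA : IsPDA F K Z A) {j j₀ : Fin F} {k k₀ : Fin K} {t : S}
    (h : A j k = some t) (h₀ : A j₀ k₀ = some t) : j = j₀ ∨ A j k₀ = none := by
  obtain ⟨-, -, column_inj, rectangle⟩ := hA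
  refine or_iff_not_imp_left.2 fun hj => (rectangle j j₀ k k₀ t hj ?_ h h₀).1
  rintro rfl
  exact hj (column_inj j j₀ k t h h₀)

theorem card_filter_eq_some_le (hA : IsPDA F K Z A) (t : S) :
    (Finset.univ.filter fun p : Fin F × Fin K => A p.1 p.2 = some t).card ≤ Z + 1 := by
  rcases Finset.eq_empty_or_nonempty
    (Finset.univ.filter fun p : Fin F × Fin K => A p.1 p.2 = some t) with hempty | ⟨⟨j₀, k₀⟩, h₀⟩
  · simp [hempty]
  replace h₀ : A j₀ k₀ = some t := (Finset.mem_filter.1 h₀).2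
  calc
    _ ≤ (insert j₀ (Finset.univ.filter fun j => A j k₀ = none)).card := by
      refine Finset.card_le_card_of_injOn Prod.fst ?_ ?_
      · rintro ⟨j, k⟩ h
        simpa using hA.eq_or_eq_none (Finset.mem_filter.1 h).2 h₀
      · rintro ⟨j, k₁⟩ h₁ ⟨_, k₂⟩ h₂ rfl
        exact congrArg (j, ·)
          (hA.2.1 j k₁ k₂ t (Finset.mem_filter.1 h₁).2 (Finset.mem_filter.1 h₂).2)
    _ ≤ Z + 1 := hA.1 k₀ ▸ Finset.card_insert_le _ _

theorem mul_sub_le_mul_card [Fintype S] (hA : IsPDA F K Z A) :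
    K * (F - Z) ≤ (Z + 1) * Fintype.card S := by
  have hmaps : ∀ p ∈ Finset.univ.filter (fun p : Fin F × Fin K => A p.1 p.2 ≠ none),
      A p.1 p.2 ∈ (Finset.univ : Finset S).map .some := by
    intro p hp
    obtain ⟨t, ht⟩ := Option.ne_none_iff_exists.1 (Finset.mem_filter.1 hp).2
    simp [← ht]
  have hcount := Finset.card_le_mul_card_image_of_maps_to hmaps (Z + 1) fun b hb => by
    obtain ⟨t, -, rfl⟩ := Finset.mem_map.1 hb
    exact (Finset.card_le_card (Finset.filter_subset_filter _ (Finset.subset_univ _))).trans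
      (hA.card_filter_eq_some_le t)
  rwa [hA.card_filter_uncurry_ne_none, Finset.card_map, Finset.card_univ] at hcount

theorem map {f : S → T} (hf : f.Injective) (hA : IsPDA F K Z A) :
    IsPDA F K Z fun j k => (A j k).map f := by
  obtain ⟨card_empty, row_inj, column_inj, rectangle⟩ := hA
  simp only [IsPDA, Option.map_eq_none_iff, Option.map_eq_some_iff]
  refine ⟨card_empty, ?_, ?_, ?_⟩
  · rintro j k₁ k₂ _ ⟨t, h₁, rfl⟩ ⟨t', h₂, ht⟩
    exact row_inj j k₁ k₂ t h₁ (hf ht ▸ h₂)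
  · rintro j₁ j₂ k _ ⟨t, h₁, rfl⟩ ⟨t', h₂, ht⟩
    exact column_inj j₁ j₂ k t h₁ (hf ht ▸ h₂)
  · rintro j₁ j₂ k₁ k₂ _ hj hk ⟨t, h₁, rfl⟩ ⟨t', h₂, ht⟩
    exact rectangle j₁ j₂ k₁ k₂ t hj hk h₁ (hf ht ▸ h₂)

theorem sPDA_le_card [Fintype S] (hA : IsPDA F K Z A) : sPDA F K Z ≤ Fintype.card S :=
  Nat.sInf_le ⟨_, hA.map (Fintype.equivFin S).injective⟩

end IsPDA

/-- The array consisting of `ℓ` copies of `A` side by side, where the copies are kept on disjoint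
alphabets by tagging each symbol with the index of its copy: column `k` of the new array is column
`k % K` of copy `k / K`. -/
def replicatePDA {S : Type} {F K : ℕ} (ℓ : ℕ) (A : Fin F → Fin K → Option S) :
    Fin F → Fin (ℓ * K) → Option (Fin ℓ × S) :=
  fun j k => (A j k.modNat).map (k.divNat, ·)

section Replicate

variable {S : Type} {F K Z ℓ : ℕ} {A : Fin F → Fin K → Option S}

theorem replicatePDA_eq_none_iff {j : Fin F} {k : Fin (ℓ * K)} :
    replicatePDA ℓ A j k = none ↔ A j k.modNat = none :=
  Option.map_eq_none_iff

theorem replicatePDA_eq_some_iff {j : Fin F} {k : Fin (ℓ * K)} {i : Fin ℓ} {t : S} :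
    replicatePDA ℓ A j k = some (i, t) ↔ k.divNat = i ∧ A j k.modNat = some t := by
  simp [replicatePDA, and_comm]

theorem eq_of_divNat_eq_of_modNat_eq {k₁ k₂ : Fin (ℓ * K)} (hdiv : k₁.divNat = k₂.divNat)
    (hmod : k₁.modNat = k₂.modNat) : k₁ = k₂ :=
  finProdFinEquiv.symm.injective (Prod.ext hdiv hmod)

theorem IsPDA.replicate (hA : IsPDA F K Z A) (ℓ : ℕ) :
    IsPDA F (ℓ * K) Z (replicatePDA ℓ A) := by
  obtain ⟨card_empty, row_inj, column_inj, rectangle⟩ := hA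
  simp only [IsPDA, Prod.forall, replicatePDA_eq_none_iff, replicatePDA_eq_some_iff]
  refine ⟨fun k => card_empty k.modNat, ?_, ?_, ?_⟩
  · rintro j k₁ k₂ i t ⟨hi₁, h₁⟩ ⟨hi₂, h₂⟩
    exact eq_of_divNat_eq_of_modNat_eq (hi₁.trans hi₂.symm) (row_inj j _ _ t h₁ h₂)
  · rintro j₁ j₂ k i t ⟨-, h₁⟩ ⟨-, h₂⟩
    exact column_inj j₁ j₂ _ t h₁ h₂
  · rintro j₁ j₂ k₁ k₂ i t hj hk ⟨hi₁, h₁⟩ ⟨hi₂, h₂⟩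
    have hmod : k₁.modNat ≠ k₂.modNat :=
      fun hmod => hk (eq_of_divNat_eq_of_modNat_eq (hi₁.trans hi₂.symm) hmod)
    exact rectangle j₁ j₂ _ _ t hj hmod h₁ h₂

end Replicate

section Minimum

variable {F Z : ℕ}

theorem exists_isPDA (hZ : Z ≤ F) (K : ℕ) :
    ∃ A : Fin F → Fin K → Option (Fin F × Fin K), IsPDA F K Z A := by
  refine ⟨fun j k => if (j : ℕ) < Z then none else some (j, k), ?_⟩
  simp only [IsPDA, ite_eq_left_iff, reduceCtorEq, imp_false, not_not]
  refine ⟨fun _ => by simp [Fin.card_filter_val_lt, hZ], ?_, ?_, ?_⟩ <;> grind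

theorem exists_isPDA_sPDA (hZ : Z ≤ F) (K : ℕ) :
    ∃ A : Fin F → Fin K → Option (Fin (sPDA F K Z)), IsPDA F K Z A := by
  obtain ⟨A, hA⟩ := exists_isPDA hZ K
  exact Nat.sInf_mem (s := {n | ∃ A : Fin F → Fin K → Option (Fin n), IsPDA F K Z A})
    ⟨_, _, hA.map finProdFinEquiv.injective⟩

theorem mul_sub_le_mul_sPDA (hZ : Z ≤ F) (K : ℕ) : K * (F - Z) ≤ (Z + 1) * sPDA F K Z := by
  obtain ⟨A, hA⟩ := exists_isPDA_sPDA hZ K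
  simpa using hA.mul_sub_le_mul_card

theorem sPDA_mul_le (hZ : Z ≤ F) (K ℓ : ℕ) : sPDA F (ℓ * K) Z ≤ ℓ * sPDA F K Z := by
  obtain ⟨A, hA⟩ := exists_isPDA_sPDA hZ K
  simpa using (hA.replicate ℓ).sPDA_le_card

end Minimum

theorem stmt_9 (F K Z : ℕ) (hF : 0 < F) (hK : 0 < K) (hZ : Z < F)
    (hdvd : (Z + 1) ∣ K * (F - Z))
    (hs : sPDA F K Z = K * (F - Z) / (Z + 1)) :
    ∀ ℓ : ℕ, 1 ≤ ℓ → sPDA F (ℓ * K) Z = ℓ * K * (F - Z) / (Z + 1) := by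
  intro ℓ _
  apply le_antisymm
  · calc
      sPDA F (ℓ * K) Z ≤ ℓ * sPDA F K Z := sPDA_mul_le hZ.le K ℓ
      _ = ℓ * K * (F - Z) / (Z + 1) := by rw [hs, ← Nat.mul_div_assoc ℓ hdvd, mul_assoc]
  · exact Nat.div_le_of_le_mul (mul_sub_le_mul_sPDA hZ.le (ℓ * K))
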